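/- arXiv:2006.11608 — 2 statements merged into one kernel-verified Lean document; each statement's English description precedes it below -/
import Mathlib

section
/- If c(α,β,ρ,λ) = (β(2−λ) + ρα)/(1−βλ) < 1, then ‖Π T̃^{(λ)}(V1) − Π T̃^{(λ)}(V2)‖_d ≤ c(α,β,ρ,λ)·‖V1 − V2‖_d for all V1, V2 ∈ ℝ^S, and there exists a unique w ∈ ℝ^L such that Φw = Π T̃^{(λ)}(Φw). -/
/-!
The map `V ↦ (√(d s) V s)ₛ` turns `‖·‖_d` into a Euclidean norm, in which three facts combine.

* If `|y| ≤ k · Pₑ|x|` entrywise then `‖y‖_d ≤ k‖x‖_d`: Jensen's inequality row by row, then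
  stationarity of `d` (`dnorm_le_of_abs_le`). In particular `‖αP x‖_d ≤ β‖x‖_d`.
* An infimum of linear functionals is superadditive, so `σ_Û(V₁) - σ_Û(V₂) ≤ -σ_Û(V₂ - V₁)`, which
  is within `ρ‖V₁ - V₂‖_d` of `-σ_U(V₂ - V₁)`. The exploration assumption gives
  `α|u(s')| ≤ β Pₑ(s,s')` for `u ∈ U_s`, hence
  `‖α(σ_Û(V₁) - σ_Û(V₂))‖_d ≤ (β + ρα)‖V₁ - V₂‖_d` (`dnorm_sigma_sub_le`).
* `Π` is an orthogonal projection, hence nonexpansive (`dnorm_projMat_le`).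

The `m`-th summand of the operator is therefore Lipschitz with constant
`λᵐ[(∑_{t ≤ m} βᵗ)(β + ρα) + βᵐ⁺¹]`, and summing these geometric series with weight `1 - λ` gives
exactly `c`. Banach's fixed point theorem yields a unique fixed point of `Π T̃` on `ℝ^S`; it lies in
the range of `Φ`, and `Φ` is injective because `ΦᵀDΦ` is invertible.
-/

open Matrix Finset

/-- d-weighted Euclidean norm on ℝ^S. -/
noncomputable def dnorm {S : Type*} [Fintype S] (d V : S → ℝ) : ℝ :=
  Real.sqrt (∑ s, d s * (V s) ^ 2)

/-- σ_U(V)(s) = inf_{u ∈ U_s} Σ_{s'} u(s') V(s'). -/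
noncomputable def sigmaSet {S : Type*} [Fintype S] (U : S → Set (S → ℝ)) (V : S → ℝ) :
    S → ℝ :=
  fun s => sInf ((fun u => ∑ s', u s' * V s') '' U s)

/-- The (approximate) robust TD(λ) operator built from the uncertainty sets `Uh`. -/
noncomputable def approxOp {S : Type*} [Fintype S] [DecidableEq S] (r : S → ℝ)
    (P : Matrix S S ℝ) (α lam : ℝ) (Uh : S → Set (S → ℝ)) (V : S → ℝ) : S → ℝ :=
  (1 - lam) • ∑' m : ℕ, lam ^ m •
    ((∑ t ∈ Finset.range (m + 1), ((α • P) ^ t).mulVec r)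
      + α • (∑ t ∈ Finset.range (m + 1), ((α • P) ^ t).mulVec (sigmaSet Uh V))
      + ((α • P) ^ (m + 1)).mulVec V)

/-- The d-weighted orthogonal projection Π = Φ(ΦᵀDΦ)⁻¹ΦᵀD onto the column space of Φ. -/
noncomputable def projMat {S : Type*} [Fintype S] [DecidableEq S] {L : ℕ}
    (Φ : Matrix S (Fin L) ℝ) (d : S → ℝ) : Matrix S S ℝ :=
  Φ * (Φᵀ * Matrix.diagonal d * Φ)⁻¹ * Φᵀ * Matrix.diagonal d

/-! ### The weighted norm as a Euclidean norm -/

/-- The isometry `V ↦ (√(d s) V s)ₛ` from `(ℝ^S, ‖·‖_d)` to Euclidean space. -/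
noncomputable def wmap {S : Type*} [Fintype S] (d : S → ℝ) :
    (S → ℝ) →ₗ[ℝ] EuclideanSpace ℝ S where
  toFun V := WithLp.toLp 2 (fun s => Real.sqrt (d s) * V s)
  map_add' V W := by ext s; simp [mul_add]
  map_smul' c V := by ext s; simp; ring

/-- The inverse of `wmap` for positive weights. -/
noncomputable def wmapInv {S : Type*} [Fintype S] (d : S → ℝ) (x : EuclideanSpace ℝ S) : S → ℝ :=
  fun s => x s / Real.sqrt (d s)

section Norm

variable {S : Type*} [Fintype S] {d : S → ℝ}

lemma wmap_wmapInv (hd : ∀ s, 0 < d s) (x : EuclideanSpace ℝ S) :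
    wmap d (wmapInv d x) = x := by
  ext s
  have := (Real.sqrt_pos.2 (hd s)).ne'
  simp only [wmap, wmapInv, LinearMap.coe_mk, AddHom.coe_mk]
  field_simp

lemma wmapInv_wmap (hd : ∀ s, 0 < d s) (V : S → ℝ) : wmapInv d (wmap d V) = V := by
  ext s
  have := (Real.sqrt_pos.2 (hd s)).ne'
  simp only [wmap, wmapInv, LinearMap.coe_mk, AddHom.coe_mk]
  field_simp

lemma dnorm_eq_norm (hd : ∀ s, 0 < d s) (V : S → ℝ) : dnorm d V = ‖wmap d V‖ := by
  rw [EuclideanSpace.norm_eq, dnorm]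
  congr 1
  refine Finset.sum_congr rfl fun s _ => ?_
  simp [wmap, mul_pow, Real.sq_sqrt (hd s).le]

lemma dnorm_nonneg (V : S → ℝ) : 0 ≤ dnorm d V := Real.sqrt_nonneg _

lemma dnorm_add_le (hd : ∀ s, 0 < d s) (V W : S → ℝ) :
    dnorm d (V + W) ≤ dnorm d V + dnorm d W := by
  simp only [dnorm_eq_norm hd, map_add]
  exact norm_add_le _ _

lemma dnorm_smul (hd : ∀ s, 0 < d s) (c : ℝ) (V : S → ℝ) :
    dnorm d (c • V) = |c| * dnorm d V := by
  simp only [dnorm_eq_norm hd, map_smul, norm_smul, Real.norm_eq_abs]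

lemma dnorm_sum_le (hd : ∀ s, 0 < d s) {ι : Type*} (A : Finset ι) (f : ι → S → ℝ) :
    dnorm d (∑ i ∈ A, f i) ≤ ∑ i ∈ A, dnorm d (f i) := by
  simp only [dnorm_eq_norm hd, map_sum]
  exact norm_sum_le _ _

lemma dnorm_mono (hd : ∀ s, 0 < d s) {y z : S → ℝ} (h : ∀ s, |y s| ≤ z s) :
    dnorm d y ≤ dnorm d z := by
  refine Real.sqrt_le_sqrt (Finset.sum_le_sum fun s _ => ?_)
  refine mul_le_mul_of_nonneg_left ?_ (hd s).le
  exact sq_le_sq.2 ((h s).trans (le_abs_self _))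

lemma dnorm_const (hstat1 : ∑ s, d s = 1) {c : ℝ} (hc : 0 ≤ c) :
    dnorm d (fun _ => c) = c := by
  rw [dnorm, ← Finset.sum_mul, hstat1, one_mul, Real.sqrt_sq hc]

lemma abs_apply_le (hd : ∀ s, 0 < d s) (V : S → ℝ) (s : S) :
    |V s| ≤ dnorm d V / Real.sqrt (d s) := by
  rw [le_div_iff₀ (Real.sqrt_pos.2 (hd s)), dnorm_eq_norm hd]
  have := PiLp.norm_apply_le (wmap d V) s
  simpa [wmap, abs_mul, abs_of_nonneg (Real.sqrt_nonneg (d s)), mul_comm] using this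

/-- Domination by `k · Pe|x|` costs only the factor `k`, by Jensen's inequality in each row and
stationarity of `d`. -/
lemma dnorm_le_of_abs_le (hd : ∀ s, 0 < d s) {Pe : Matrix S S ℝ}
    (hPe0 : ∀ s s', 0 ≤ Pe s s') (hPe1 : ∀ s, ∑ s', Pe s s' = 1)
    (hstat2 : ∀ s', ∑ s, d s * Pe s s' = d s') {k : ℝ} (hk : 0 ≤ k) {x y : S → ℝ}
    (h : ∀ s, |y s| ≤ k * ∑ s', Pe s s' * |x s'|) : dnorm d y ≤ k * dnorm d x := by
  have h1 : dnorm d (fun s => ∑ s', Pe s s' * |x s'|) ≤ dnorm d x := by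
    refine Real.sqrt_le_sqrt ?_
    calc ∑ s, d s * (∑ s', Pe s s' * |x s'|) ^ 2
        ≤ ∑ s, d s * ∑ s', Pe s s' * x s' ^ 2 := by
          refine Finset.sum_le_sum fun s _ => mul_le_mul_of_nonneg_left ?_ (hd s).le
          have := Real.pow_arith_mean_le_arith_mean_pow_of_even Finset.univ (fun s' => Pe s s')
            (fun s' => |x s'|) (fun s' _ => hPe0 s s') (hPe1 s) even_two
          simpa [sq_abs] using this
      _ = ∑ s', d s' * x s' ^ 2 := by
          simp only [Finset.mul_sum]
          rw [Finset.sum_comm]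
          refine Finset.sum_congr rfl fun s' _ => ?_
          rw [← hstat2 s', Finset.sum_mul]
          exact Finset.sum_congr rfl fun s _ => by ring
  calc dnorm d y ≤ dnorm d (k • fun s => ∑ s', Pe s s' * |x s'|) := dnorm_mono hd h
    _ = k * dnorm d (fun s => ∑ s', Pe s s' * |x s'|) := by rw [dnorm_smul hd, abs_of_nonneg hk]
    _ ≤ k * dnorm d x := mul_le_mul_of_nonneg_left h1 hk

lemma dnorm_tsum_le (hd : ∀ s, 0 < d s) {f : ℕ → S → ℝ} (hf : Summable f) {g : ℕ → ℝ} {a : ℝ}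
    (hg : HasSum g a) (h : ∀ m, dnorm d (f m) ≤ g m) : dnorm d (∑' m, f m) ≤ a := by
  have hc : Continuous (wmap d) := LinearMap.continuous_of_finiteDimensional _
  have h1 : HasSum (fun m => wmap d (f m)) (wmap d (∑' m, f m)) := hf.hasSum.map (wmap d) hc
  rw [dnorm_eq_norm hd, ← h1.tsum_eq]
  exact tsum_of_norm_bounded hg fun m => by rw [← dnorm_eq_norm hd]; exact h m

lemma dnorm_pow_mulVec_le [DecidableEq S] {A : Matrix S S ℝ} {β : ℝ} (hβ : 0 ≤ β)
    (hA : ∀ x, dnorm d (A.mulVec x) ≤ β * dnorm d x) (t : ℕ) (x : S → ℝ) :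
    dnorm d ((A ^ t).mulVec x) ≤ β ^ t * dnorm d x := by
  induction t with
  | zero => simp
  | succ n ih =>
    rw [pow_succ', ← Matrix.mulVec_mulVec]
    calc _ ≤ β * dnorm d ((A ^ n).mulVec x) := hA _
      _ ≤ β * (β ^ n * dnorm d x) := mul_le_mul_of_nonneg_left ih hβ
      _ = _ := by ring

/-! ### The support function and the projection -/

lemma sigmaSet_le {U : S → Set (S → ℝ)} (hUc : ∀ s, IsCompact (U s)) (V : S → ℝ) {s : S}
    {u : S → ℝ} (hu : u ∈ U s) : sigmaSet U V s ≤ ∑ s', u s' * V s' := by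
  refine csInf_le ?_ ⟨u, hu, rfl⟩
  exact ((hUc s).image (by fun_prop)).bddBelow

/-- Superadditivity of an infimum of linear functionals. -/
lemma sigmaSet_superadd {U : S → Set (S → ℝ)} (hU : ∀ s, (U s).Nonempty)
    (hUc : ∀ s, IsCompact (U s)) (V W : S → ℝ) (s : S) :
    sigmaSet U V s + sigmaSet U W s ≤ sigmaSet U (V + W) s := by
  refine le_csInf ((hU s).image _) ?_
  rintro _ ⟨u, hu, rfl⟩
  have h1 := sigmaSet_le hUc V hu
  have h2 := sigmaSet_le hUc W hu
  simp only [Pi.add_apply, mul_add, Finset.sum_add_distrib]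
  linarith

/-- One-sided Lipschitz estimate for the approximate support function, before taking norms. -/
lemma sigma_sub_le {P Pe : Matrix S S ℝ} {α β ρ : ℝ} (hα : 0 < α)
    (hP0 : ∀ s s', 0 ≤ P s s')
    {U : S → Set (S → ℝ)} (hU : ∀ s, (U s).Nonempty)
    (hexp1 : ∀ s s', ∀ u ∈ U s, 0 ≤ P s s' + u s')
    (hexp2 : ∀ s s', ∀ u ∈ U s, α * (P s s' + u s') ≤ β * Pe s s')
    (hexp3 : ∀ s s', α * P s s' ≤ β * Pe s s')
    {Uh : S → Set (S → ℝ)} (hUh : ∀ s, (Uh s).Nonempty) (hUhc : ∀ s, IsCompact (Uh s))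
    (hρ : ∀ (V : S → ℝ) (s : S), |sigmaSet Uh V s - sigmaSet U V s| ≤ ρ * dnorm d V)
    (V1 V2 : S → ℝ) (s : S) :
    α * (sigmaSet Uh V1 s - sigmaSet Uh V2 s) ≤
      β * ∑ s', Pe s s' * |(V2 - V1) s'| + ρ * α * dnorm d (V2 - V1) := by
  have h1 := sigmaSet_superadd hUh hUhc V1 (V2 - V1) s
  rw [add_sub_cancel] at h1
  have h2 := (abs_le.1 (hρ (V2 - V1) s)).1
  have h3 : -(β * ∑ s', Pe s s' * |(V2 - V1) s'|) / α ≤ sigmaSet U (V2 - V1) s := by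
    refine le_csInf ((hU s).image _) ?_
    rintro _ ⟨u, hu, rfl⟩
    rw [div_le_iff₀ hα, Finset.mul_sum, ← Finset.sum_neg_distrib, Finset.sum_mul]
    refine Finset.sum_le_sum fun s' _ => ?_
    -- `-βPe ≤ -αP ≤ αu ≤ βPe - αP ≤ βPe`
    have hu1 : |α * u s'| ≤ β * Pe s s' := by
      have a1 := mul_nonneg hα.le (hexp1 s s' u hu)
      have a2 := hexp2 s s' u hu
      have a3 := hexp3 s s'
      have a4 := mul_nonneg hα.le (hP0 s s')
      rw [abs_le]; constructor <;> linarith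
    have a5 := mul_le_mul_of_nonneg_right hu1 (abs_nonneg ((V2 - V1) s'))
    rw [← abs_mul] at a5
    have a6 := neg_abs_le (α * u s' * (V2 - V1) s')
    linarith
  rw [div_le_iff₀ hα] at h3
  have h4 : α * (sigmaSet Uh V1 s - sigmaSet Uh V2 s) ≤
      α * (ρ * dnorm d (V2 - V1) - sigmaSet U (V2 - V1) s) :=
    mul_le_mul_of_nonneg_left (by linarith) hα.le
  linarith

lemma dnorm_sub_comm (V W : S → ℝ) : dnorm d (V - W) = dnorm d (W - V) := by
  simp only [dnorm, Pi.sub_apply]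
  congr 1
  exact Finset.sum_congr rfl fun s _ => by ring

lemma dnorm_sigma_sub_le (hd : ∀ s, 0 < d s) {P Pe : Matrix S S ℝ} {α β ρ : ℝ} (hα : 0 < α)
    (hβ : 0 ≤ β) (hρ0 : 0 ≤ ρ) (hP0 : ∀ s s', 0 ≤ P s s')
    (hPe0 : ∀ s s', 0 ≤ Pe s s') (hPe1 : ∀ s, ∑ s', Pe s s' = 1)
    (hstat1 : ∑ s, d s = 1) (hstat2 : ∀ s', ∑ s, d s * Pe s s' = d s')
    {U : S → Set (S → ℝ)} (hU : ∀ s, (U s).Nonempty)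
    (hexp1 : ∀ s s', ∀ u ∈ U s, 0 ≤ P s s' + u s')
    (hexp2 : ∀ s s', ∀ u ∈ U s, α * (P s s' + u s') ≤ β * Pe s s')
    (hexp3 : ∀ s s', α * P s s' ≤ β * Pe s s')
    {Uh : S → Set (S → ℝ)} (hUh : ∀ s, (Uh s).Nonempty) (hUhc : ∀ s, IsCompact (Uh s))
    (hρ : ∀ (V : S → ℝ) (s : S), |sigmaSet Uh V s - sigmaSet U V s| ≤ ρ * dnorm d V)
    (V1 V2 : S → ℝ) :
    dnorm d (α • (sigmaSet Uh V1 - sigmaSet Uh V2)) ≤ (β + ρ * α) * dnorm d (V1 - V2) := by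
  have hsum : ∀ s, 0 ≤ ∑ s', Pe s s' * |(V1 - V2) s'| := fun s =>
    Finset.sum_nonneg fun s' _ => mul_nonneg (hPe0 s s') (abs_nonneg _)
  have hn := dnorm_nonneg (d := d) (V1 - V2)
  calc dnorm d (α • (sigmaSet Uh V1 - sigmaSet Uh V2))
      ≤ dnorm d ((fun s => β * ∑ s', Pe s s' * |(V1 - V2) s'|)
          + fun _ => ρ * α * dnorm d (V1 - V2)) := by
        refine dnorm_mono hd fun s => ?_
        have h1 := sigma_sub_le hα hP0 hU hexp1 hexp2 hexp3 hUh hUhc hρ V1 V2 s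
        have h2 := sigma_sub_le hα hP0 hU hexp1 hexp2 hexp3 hUh hUhc hρ V2 V1 s
        rw [dnorm_sub_comm] at h1
        simp only [Pi.sub_apply, abs_sub_comm (V2 _)] at h1 h2
        simp only [Pi.add_apply, Pi.smul_apply, Pi.sub_apply, smul_eq_mul]
        rw [abs_le]; constructor <;> linarith
    _ ≤ β * dnorm d (V1 - V2) + ρ * α * dnorm d (V1 - V2) := by
        refine (dnorm_add_le hd _ _).trans (add_le_add ?_ ?_)
        · refine dnorm_le_of_abs_le hd hPe0 hPe1 hstat2 hβ fun s => ?_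
          rw [abs_of_nonneg (mul_nonneg hβ (hsum s))]
        · rw [dnorm_const hstat1 (by positivity)]
    _ = _ := by ring

variable [DecidableEq S]

/-- Coordinates of the projection of `V` in the columns of `Φ`. -/
noncomputable def projCoord {L : ℕ} (Φ : Matrix S (Fin L) ℝ) (d : S → ℝ) (V : S → ℝ) :
    Fin L → ℝ :=
  ((Φᵀ * Matrix.diagonal d * Φ)⁻¹ * Φᵀ * Matrix.diagonal d).mulVec V

lemma projMat_mulVec {L : ℕ} (Φ : Matrix S (Fin L) ℝ) (V : S → ℝ) :
    (projMat Φ d).mulVec V = Φ.mulVec (projCoord Φ d V) := by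
  simp only [projMat, projCoord, Matrix.mulVec_mulVec, Matrix.mul_assoc]

/-- Pythagoras: the residual `V - ΠV` is `d`-orthogonal to the range of `Φ`. -/
lemma dnorm_projMat_le (hd : ∀ s, 0 < d s) {L : ℕ} (Φ : Matrix S (Fin L) ℝ)
    (hunit : IsUnit (Φᵀ * Matrix.diagonal d * Φ)) (V : S → ℝ) :
    dnorm d ((projMat Φ d).mulVec V) ≤ dnorm d V := by
  rw [projMat_mulVec]
  set w := projCoord Φ d V with hw
  have h1 : (Φᵀ * Matrix.diagonal d).mulVec (V - Φ.mulVec w) = 0 := by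
    rw [Matrix.mulVec_sub, Matrix.mulVec_mulVec, hw, projCoord, Matrix.mulVec_mulVec,
      Matrix.mul_assoc _ Φᵀ, ← Matrix.mul_assoc _ _ (Φᵀ * _),
      Matrix.mul_nonsing_inv _ ((Matrix.isUnit_iff_isUnit_det _).1 hunit), Matrix.one_mul, sub_self]
  have h2 : ∑ s, d s * (Φ.mulVec w s * (V s - Φ.mulVec w s)) = 0 := by
    have : w ⬝ᵥ (Φᵀ * Matrix.diagonal d).mulVec (V - Φ.mulVec w) = 0 := by
      rw [h1, dotProduct_zero]
    rw [← Matrix.mulVec_mulVec, Matrix.dotProduct_mulVec, Matrix.vecMul_transpose] at this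
    rw [← this]
    refine Finset.sum_congr rfl fun s _ => ?_
    rw [Matrix.mulVec_diagonal, Pi.sub_apply]
    ring
  refine Real.sqrt_le_sqrt ?_
  have h3 : ∑ s, d s * V s ^ 2 = ∑ s, d s * Φ.mulVec w s ^ 2
      + ∑ s, d s * (V s - Φ.mulVec w s) ^ 2
      + 2 * ∑ s, d s * (Φ.mulVec w s * (V s - Φ.mulVec w s)) := by
    rw [Finset.mul_sum, ← Finset.sum_add_distrib, ← Finset.sum_add_distrib]
    exact Finset.sum_congr rfl fun s _ => by ring
  have h4 : 0 ≤ ∑ s, d s * (V s - Φ.mulVec w s) ^ 2 :=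
    Finset.sum_nonneg fun s _ => mul_nonneg (hd s).le (sq_nonneg _)
  rw [h3, h2]
  linarith

lemma mulVec_injective_of_isUnit {L : ℕ} (Φ : Matrix S (Fin L) ℝ)
    (hunit : IsUnit (Φᵀ * Matrix.diagonal d * Φ)) : Function.Injective Φ.mulVec := by
  intro w w' h
  apply Matrix.mulVec_injective_of_isUnit hunit
  simp only [← Matrix.mulVec_mulVec, h]

/-! ### The TD(λ) operator -/

/-- The bracket of the TD(λ) series, with the value of the support function as a free vector
`q`. -/
noncomputable def tdTerm (r : S → ℝ) (A : Matrix S S ℝ) (α : ℝ) (q V : S → ℝ) (m : ℕ) : S → ℝ :=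
  (∑ t ∈ Finset.range (m + 1), (A ^ t).mulVec r)
      + α • (∑ t ∈ Finset.range (m + 1), (A ^ t).mulVec q)
      + (A ^ (m + 1)).mulVec V

lemma dnorm_tdTerm_le (hd : ∀ s, 0 < d s) {A : Matrix S S ℝ} {β : ℝ} (hβ : 0 ≤ β)
    (hA : ∀ x, dnorm d (A.mulVec x) ≤ β * dnorm d x) (r : S → ℝ) (α : ℝ) (q V : S → ℝ) (m : ℕ) :
    dnorm d (tdTerm r A α q V m) ≤
      (∑ t ∈ Finset.range (m + 1), β ^ t) * (dnorm d r + dnorm d (α • q))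
        + β ^ (m + 1) * dnorm d V := by
  have key : ∀ x, dnorm d (∑ t ∈ Finset.range (m + 1), (A ^ t).mulVec x) ≤
      (∑ t ∈ Finset.range (m + 1), β ^ t) * dnorm d x := fun x => by
    rw [Finset.sum_mul]
    exact (dnorm_sum_le hd _ _).trans
      (Finset.sum_le_sum fun t _ => dnorm_pow_mulVec_le hβ hA t x)
  have h2 := key (α • q)
  simp only [Matrix.mulVec_smul, ← Finset.smul_sum] at h2
  refine (dnorm_add_le hd _ _).trans (add_le_add ?_ (dnorm_pow_mulVec_le hβ hA _ _))
  rw [mul_add]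
  exact (dnorm_add_le hd _ _).trans (add_le_add (key r) h2)

lemma tdTerm_sub (r : S → ℝ) (A : Matrix S S ℝ) (α : ℝ) (q q' V V' : S → ℝ) (m : ℕ) :
    tdTerm r A α q V m - tdTerm r A α q' V' m = tdTerm 0 A α (q - q') (V - V') m := by
  simp only [tdTerm, Matrix.mulVec_sub, Matrix.mulVec_zero, Finset.sum_const_zero,
    Finset.sum_sub_distrib, smul_sub]
  abel

/-- The geometric double series behind the contraction constant. -/
lemma hasSum_weights {β lam : ℝ} (hβ : β ∈ Set.Ioo (0 : ℝ) 1) (hlam : lam ∈ Set.Ico (0 : ℝ) 1)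
    (a b : ℝ) :
    HasSum (fun m : ℕ => lam ^ m * ((∑ t ∈ Finset.range (m + 1), β ^ t) * a + β ^ (m + 1) * b))
      ((a / (1 - lam) + β * b) / (1 - β * lam)) := by
  have h1 : 1 - β ≠ 0 := by linarith [hβ.2]
  have h2 : 1 - lam ≠ 0 := by linarith [hlam.2]
  have hlt : β * lam < 1 := by nlinarith [hβ.1, hβ.2, hlam.1, hlam.2]
  have h3 : 1 - β * lam ≠ 0 := by linarith
  have h3' : 1 - lam * β ≠ 0 := by rwa [mul_comm]
  have s1 := hasSum_geometric_of_lt_one hlam.1 hlam.2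
  have s2 := hasSum_geometric_of_lt_one (mul_nonneg hβ.1.le hlam.1) hlt
  have := (s1.mul_left (a / (1 - β))).add (s2.mul_left (β * b - β * a / (1 - β)))
  have e1 : (a / (1 - lam) + β * b) / (1 - β * lam) =
      a / (1 - β) * (1 - lam)⁻¹ + (β * b - β * a / (1 - β)) * (1 - β * lam)⁻¹ := by
    field_simp
    ring
  rw [e1]
  refine (congrArg (HasSum · _) (funext fun m => ?_)).mpr this
  have hg : ∑ t ∈ Finset.range (m + 1), β ^ t = (1 - β ^ (m + 1)) / (1 - β) := by
    rw [eq_div_iff h1, geom_sum_mul_neg]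
  rw [hg, mul_pow]
  field_simp
  ring

lemma summable_tdTerm (hd : ∀ s, 0 < d s) {A : Matrix S S ℝ} {β lam : ℝ}
    (hβ : β ∈ Set.Ioo (0 : ℝ) 1) (hlam : lam ∈ Set.Ico (0 : ℝ) 1)
    (hA : ∀ x, dnorm d (A.mulVec x) ≤ β * dnorm d x) (r : S → ℝ) (α : ℝ) (q V : S → ℝ) :
    Summable (fun m : ℕ => lam ^ m • tdTerm r A α q V m) := by
  rw [Pi.summable]
  intro s
  refine Summable.of_norm_bounded
    ((hasSum_weights hβ hlam (dnorm d r + dnorm d (α • q)) (dnorm d V)).summable.div_const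
      (Real.sqrt (d s))) fun m => ?_
  refine (abs_apply_le hd _ s).trans (div_le_div_of_nonneg_right ?_ (Real.sqrt_nonneg _))
  rw [dnorm_smul hd, abs_of_nonneg (pow_nonneg hlam.1 m)]
  exact mul_le_mul_of_nonneg_left (dnorm_tdTerm_le hd hβ.1.le hA _ _ _ _ _) (pow_nonneg hlam.1 m)

lemma dnorm_approxOp_sub_le (hd : ∀ s, 0 < d s) (r : S → ℝ) {P : Matrix S S ℝ} {α β lam K : ℝ}
    (hβ : β ∈ Set.Ioo (0 : ℝ) 1) (hlam : lam ∈ Set.Ico (0 : ℝ) 1)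
    (hA : ∀ x, dnorm d ((α • P).mulVec x) ≤ β * dnorm d x) (Uh : S → Set (S → ℝ)) (V1 V2 : S → ℝ)
    (hK : dnorm d (α • (sigmaSet Uh V1 - sigmaSet Uh V2)) ≤ K * dnorm d (V1 - V2)) :
    dnorm d (approxOp r P α lam Uh V1 - approxOp r P α lam Uh V2) ≤
      (K + β * (1 - lam)) / (1 - β * lam) * dnorm d (V1 - V2) := by
  have e : ∀ V, approxOp r P α lam Uh V =
      (1 - lam) • ∑' m : ℕ, lam ^ m • tdTerm r (α • P) α (sigmaSet Uh V) V m := fun _ => rfl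
  have hs := fun V => summable_tdTerm hd hβ hlam hA r α (sigmaSet Uh V) V
  have hl : 0 < 1 - lam := by linarith [hlam.2]
  rw [e, e, ← smul_sub, ← (hs V1).tsum_sub (hs V2), dnorm_smul hd, abs_of_pos hl]
  have hw := hasSum_weights hβ hlam (K * dnorm d (V1 - V2)) (dnorm d (V1 - V2))
  have hb := dnorm_tsum_le hd ((hs V1).sub (hs V2)) hw fun m => by
    rw [← smul_sub, tdTerm_sub, dnorm_smul hd, abs_of_nonneg (pow_nonneg hlam.1 m)]
    refine mul_le_mul_of_nonneg_left ?_ (pow_nonneg hlam.1 m)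
    refine (dnorm_tdTerm_le hd hβ.1.le hA _ _ _ _ _).trans ?_
    have h0 : dnorm d (0 : S → ℝ) = 0 := by simp [dnorm]
    rw [h0, zero_add]
    have hg : 0 ≤ ∑ t ∈ Finset.range (m + 1), β ^ t :=
      Finset.sum_nonneg fun t _ => pow_nonneg hβ.1.le t
    have := mul_le_mul_of_nonneg_left hK hg
    linarith
  refine (mul_le_mul_of_nonneg_left hb hl.le).trans (le_of_eq ?_)
  have hlt : β * lam < 1 := by nlinarith [hβ.1, hβ.2, hlam.1, hlam.2]
  have h3 : 1 - β * lam ≠ 0 := by linarith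
  field_simp

end Norm

/-! ### Contraction and fixed point -/

theorem projected_approxOp_contraction_and_unique_fixed_point
    {S : Type*} [Fintype S] [DecidableEq S] [Nonempty S] {L : ℕ}
    (d : S → ℝ) (hd : ∀ s, 0 < d s)
    (r : S → ℝ) (P : Matrix S S ℝ)
    (hP0 : ∀ s s', 0 ≤ P s s') (hP1 : ∀ s, ∑ s', P s s' = 1)
    (α : ℝ) (hα : α ∈ Set.Ioo (0 : ℝ) 1)
    (U : S → Set (S → ℝ)) (hU : ∀ s, (U s).Nonempty) (hUc : ∀ s, IsCompact (U s))
    (Pe : Matrix S S ℝ) (hPe0 : ∀ s s', 0 ≤ Pe s s') (hPe1 : ∀ s, ∑ s', Pe s s' = 1)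
    (β : ℝ) (hβ : β ∈ Set.Ioo (0 : ℝ) 1)
    (hexp1 : ∀ s s', ∀ u ∈ U s, 0 ≤ P s s' + u s')
    (hexp2 : ∀ s s', ∀ u ∈ U s, α * (P s s' + u s') ≤ β * Pe s s')
    (hexp3 : ∀ s s', α * P s s' ≤ β * Pe s s')
    (hstat1 : ∑ s, d s = 1) (hstat2 : ∀ s', ∑ s, d s * Pe s s' = d s')
    (Uh : S → Set (S → ℝ)) (hUh : ∀ s, (Uh s).Nonempty) (hUhc : ∀ s, IsCompact (Uh s))
    (ρ : ℝ) (hρ0 : 0 ≤ ρ)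
    (hρ : ∀ (V : S → ℝ) (s : S), |sigmaSet Uh V s - sigmaSet U V s| ≤ ρ * dnorm d V)
    (lam : ℝ) (hlam : lam ∈ Set.Ico (0 : ℝ) 1)
    (Φ : Matrix S (Fin L) ℝ) (hrank : Φ.rank = L)
    (hunit : IsUnit (Φᵀ * Matrix.diagonal d * Φ))
    (hc : (β * (2 - lam) + ρ * α) / (1 - β * lam) < 1) :
    (∀ V1 V2 : S → ℝ,
        dnorm d ((projMat Φ d).mulVec (approxOp r P α lam Uh V1)
            - (projMat Φ d).mulVec (approxOp r P α lam Uh V2))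
          ≤ (β * (2 - lam) + ρ * α) / (1 - β * lam) * dnorm d (V1 - V2)) ∧
      (∃! w : Fin L → ℝ,
        Φ.mulVec w = (projMat Φ d).mulVec (approxOp r P α lam Uh (Φ.mulVec w))) := by
  
  have hA : ∀ x, dnorm d ((α • P).mulVec x) ≤ β * dnorm d x := fun x => by
    refine dnorm_le_of_abs_le hd hPe0 hPe1 hstat2 hβ.1.le fun s => ?_
    rw [Finset.mul_sum]
    refine (Finset.abs_sum_le_sum_abs _ _).trans (Finset.sum_le_sum fun s' _ => ?_)
    change |α * P s s' * x s'| ≤ _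
    rw [abs_mul, abs_of_nonneg (mul_nonneg hα.1.le (hP0 s s')), ← mul_assoc]
    exact mul_le_mul_of_nonneg_right (hexp3 s s') (abs_nonneg _)
  have hcontr : ∀ V1 V2 : S → ℝ,
      dnorm d ((projMat Φ d).mulVec (approxOp r P α lam Uh V1)
          - (projMat Φ d).mulVec (approxOp r P α lam Uh V2))
        ≤ (β * (2 - lam) + ρ * α) / (1 - β * lam) * dnorm d (V1 - V2) := fun V1 V2 => by
    rw [← Matrix.mulVec_sub]
    refine (dnorm_projMat_le hd Φ hunit _).trans ?_
    have := dnorm_approxOp_sub_le hd r hβ hlam hA Uh V1 V2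
      (dnorm_sigma_sub_le hd hα.1 hβ.1.le hρ0 hP0 hPe0 hPe1 hstat1 hstat2 hU hexp1 hexp2 hexp3
        hUh hUhc hρ V1 V2)
    rwa [show β + ρ * α + β * (1 - lam) = β * (2 - lam) + ρ * α by ring] at this
  refine ⟨hcontr, ?_⟩
  have hc0 : 0 ≤ (β * (2 - lam) + ρ * α) / (1 - β * lam) := by
    have hlt : β * lam < 1 := by nlinarith [hβ.1, hβ.2, hlam.1, hlam.2]
    refine div_nonneg (add_nonneg (mul_nonneg hβ.1.le ?_) (mul_nonneg hρ0 hα.1.le)) ?_ <;>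
      linarith [hlam.2]
  let F : EuclideanSpace ℝ S → EuclideanSpace ℝ S := fun x =>
    wmap d ((projMat Φ d).mulVec (approxOp r P α lam Uh (wmapInv d x)))
  have hF : ContractingWith ⟨_, hc0⟩ F := by
    refine ⟨by exact_mod_cast hc, LipschitzWith.of_dist_le_mul fun x y => ?_⟩
    rw [dist_eq_norm, dist_eq_norm, ← map_sub, ← dnorm_eq_norm hd]
    refine (hcontr _ _).trans (le_of_eq ?_)
    rw [dnorm_eq_norm hd, map_sub, wmap_wmapInv hd, wmap_wmapInv hd]
    rfl
  have hfix := hF.fixedPoint_isFixedPt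
  set x := hF.fixedPoint
  have hx : wmapInv d x = (projMat Φ d).mulVec (approxOp r P α lam Uh (wmapInv d x)) := by
    conv_lhs => rw [← hfix.eq]
    exact wmapInv_wmap hd _
  -- the fixed point lies in the range of `Φ`
  have hw : Φ.mulVec (projCoord Φ d (approxOp r P α lam Uh (wmapInv d x))) = wmapInv d x := by
    rw [← projMat_mulVec, ← hx]
  refine ⟨projCoord Φ d (approxOp r P α lam Uh (wmapInv d x)), ?_, fun w' hw' => ?_⟩
  · dsimp only
    rw [hw]
    exact hx
  · apply mulVec_injective_of_isUnit Φ hunit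
    have h1 : Function.IsFixedPt F (wmap d (Φ.mulVec w')) := by
      change wmap d _ = _
      rw [wmapInv_wmap hd, ← hw']
    rw [hw, ← wmapInv_wmap hd (Φ.mulVec w'), hF.fixedPoint_unique h1]
end

section
/- Under the exploration assumption, the robust Bellman operator is a contraction in the d-weighted Euclidean norm with modulus β: for all V1, V2 ∈ ℝ^S, ‖T(V1) − T(V2)‖_d ≤ β‖V1 − V2‖_d. -/
/-!
At each state, bounding `σ_U(V1)` by the value at the minimiser `u` of `σ_U(V2)` gives
`T V1 s - T V2 s ≤ ∑ s', α (P s s' + u s') (V1 - V2) s'`. The weights are nonnegative and dominated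
by `β Pe s s'`, so, exchanging the roles of `V1` and `V2`,
`|T V1 - T V2| ≤ β Pe |V1 - V2|` pointwise (`bellman_sub_le`). Jensen's inequality for the
probability vectors `Pe s` gives `(Pe W)² ≤ Pe W²` pointwise, and averaging over `s` against the
stationary distribution `d` removes `Pe` (`sum_mul_mulVec_sq_le`).
-/

open Matrix Finset

/-- The robust Bellman operator T(V) = r + α (P V + σ_U(V)). -/
noncomputable def bellman {S : Type*} [Fintype S] (r : S → ℝ) (P : Matrix S S ℝ)
    (α : ℝ) (U : S → Set (S → ℝ)) (V : S → ℝ) : S → ℝ :=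
  fun s => r s + α * (P.mulVec V s + sigmaSet U V s)

/-- One-sided domination of the Bellman increments by `β Pe |V1 - V2|`. -/
lemma bellman_sub_le {S : Type*} [Fintype S] (r : S → ℝ) (P : Matrix S S ℝ) {α : ℝ} (hα : 0 ≤ α)
    (U : S → Set (S → ℝ)) (hU : ∀ s, (U s).Nonempty) (hUc : ∀ s, IsCompact (U s))
    (Pe : Matrix S S ℝ) (β : ℝ)
    (hexp1 : ∀ s s', ∀ u ∈ U s, 0 ≤ P s s' + u s')
    (hexp2 : ∀ s s', ∀ u ∈ U s, α * (P s s' + u s') ≤ β * Pe s s')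
    (V1 V2 : S → ℝ) (s : S) :
    bellman r P α U V1 s - bellman r P α U V2 s ≤ β * ∑ s', Pe s s' * |V1 s' - V2 s'| := by
  have hc : ∀ V : S → ℝ, IsCompact ((fun u : S → ℝ => ∑ s', u s' * V s') '' U s) := fun V =>
    (hUc s).image (by fun_prop)
  -- compactness makes the infimum defining `σ_U(V2) s` attained, at `u`
  obtain ⟨u, hu, hu2⟩ := (hc V2).sInf_mem ((hU s).image _)
  have h1 : sigmaSet U V1 s ≤ ∑ s', u s' * V1 s' := csInf_le (hc V1).bddBelow ⟨u, hu, rfl⟩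
  have h2 : sigmaSet U V2 s = ∑ s', u s' * V2 s' := hu2.symm
  calc bellman r P α U V1 s - bellman r P α U V2 s
      = α * (P.mulVec V1 s - P.mulVec V2 s + (sigmaSet U V1 s - sigmaSet U V2 s)) := by
        simp only [bellman]; ring
    _ ≤ α * (P.mulVec V1 s - P.mulVec V2 s + (∑ s', u s' * V1 s' - ∑ s', u s' * V2 s')) := by
        rw [h2]; gcongr
    _ = ∑ s', α * (P s s' + u s') * (V1 s' - V2 s') := by
        simp only [Matrix.mulVec, dotProduct, ← Finset.sum_sub_distrib, ← Finset.sum_add_distrib,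
          Finset.mul_sum]
        exact Finset.sum_congr rfl fun _ _ => by ring
    _ ≤ ∑ s', β * Pe s s' * |V1 s' - V2 s'| := by
        refine Finset.sum_le_sum fun s' _ => ?_
        exact (mul_le_mul_of_nonneg_left (le_abs_self _)
          (mul_nonneg hα (hexp1 s s' u hu))).trans
          (mul_le_mul_of_nonneg_right (hexp2 s s' u hu) (abs_nonneg _))
    _ = β * ∑ s', Pe s s' * |V1 s' - V2 s'| := by
        rw [Finset.mul_sum]
        exact Finset.sum_congr rfl fun _ _ => by ring

/-- A stochastic matrix is nonexpansive in the `L²` norm weighted by a stationary vector. -/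
lemma sum_mul_mulVec_sq_le {S : Type*} [Fintype S] (d : S → ℝ) (hd : ∀ s, 0 ≤ d s)
    (Pe : Matrix S S ℝ) (hPe0 : ∀ s s', 0 ≤ Pe s s') (hPe1 : ∀ s, ∑ s', Pe s s' = 1)
    (hstat : ∀ s', ∑ s, d s * Pe s s' = d s') (W : S → ℝ) :
    ∑ s, d s * (∑ s', Pe s s' * W s') ^ 2 ≤ ∑ s, d s * W s ^ 2 := by
  calc ∑ s, d s * (∑ s', Pe s s' * W s') ^ 2
      ≤ ∑ s, d s * ∑ s', Pe s s' * W s' ^ 2 := by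
        refine Finset.sum_le_sum fun s _ => mul_le_mul_of_nonneg_left ?_ (hd s)
        exact Real.pow_arith_mean_le_arith_mean_pow_of_even _ _ _ (fun s' _ => hPe0 s s') (hPe1 s)
          even_two
    _ = ∑ s', (∑ s, d s * Pe s s') * W s' ^ 2 := by
        simp only [Finset.mul_sum, Finset.sum_mul]
        rw [Finset.sum_comm]
        exact Finset.sum_congr rfl fun _ _ => Finset.sum_congr rfl fun _ _ => by ring
    _ = ∑ s, d s * W s ^ 2 := by simp only [hstat]

theorem bellman_dnorm_contraction {S : Type*} [Fintype S] [Nonempty S]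
    (d : S → ℝ) (hd : ∀ s, 0 < d s)
    (r : S → ℝ) (P : Matrix S S ℝ)
    (hP0 : ∀ s s', 0 ≤ P s s') (hP1 : ∀ s, ∑ s', P s s' = 1)
    (α : ℝ) (hα : α ∈ Set.Ioo (0 : ℝ) 1)
    (U : S → Set (S → ℝ)) (hU : ∀ s, (U s).Nonempty) (hUc : ∀ s, IsCompact (U s))
    (Pe : Matrix S S ℝ) (hPe0 : ∀ s s', 0 ≤ Pe s s') (hPe1 : ∀ s, ∑ s', Pe s s' = 1)
    (β : ℝ) (hβ : β ∈ Set.Ioo (0 : ℝ) 1)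
    (hexp1 : ∀ s s', ∀ u ∈ U s, 0 ≤ P s s' + u s')
    (hexp2 : ∀ s s', ∀ u ∈ U s, α * (P s s' + u s') ≤ β * Pe s s')
    (hexp3 : ∀ s s', α * P s s' ≤ β * Pe s s')
    (hstat1 : ∑ s, d s = 1) (hstat2 : ∀ s', ∑ s, d s * Pe s s' = d s')
    (V1 V2 : S → ℝ) :
    dnorm d (bellman r P α U V1 - bellman r P α U V2) ≤ β * dnorm d (V1 - V2) := by
  have hα0 := hα.1.le
  have hβ0 := hβ.1.le
  have key : ∀ s, |bellman r P α U V1 s - bellman r P α U V2 s|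
      ≤ β * ∑ s', Pe s s' * |V1 s' - V2 s'| := fun s => by
    refine abs_le'.2 ⟨bellman_sub_le r P hα0 U hU hUc Pe β hexp1 hexp2 V1 V2 s, ?_⟩
    rw [neg_sub]
    simpa only [abs_sub_comm] using bellman_sub_le r P hα0 U hU hUc Pe β hexp1 hexp2 V2 V1 s
  refine Real.sqrt_le_iff.2 ⟨mul_nonneg hβ0 (Real.sqrt_nonneg _), ?_⟩
  rw [mul_pow, dnorm, Real.sq_sqrt (Finset.sum_nonneg fun s _ => mul_nonneg (hd s).le (sq_nonneg _))]
  calc ∑ s, d s * ((bellman r P α U V1 - bellman r P α U V2) s) ^ 2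
      ≤ ∑ s, d s * (β * ∑ s', Pe s s' * |V1 s' - V2 s'|) ^ 2 := by
        refine Finset.sum_le_sum fun s _ => mul_le_mul_of_nonneg_left ?_ (hd s).le
        exact sq_le_sq.2 ((key s).trans (le_abs_self _))
    _ = β ^ 2 * ∑ s, d s * (∑ s', Pe s s' * |V1 s' - V2 s'|) ^ 2 := by
        rw [Finset.mul_sum]
        exact Finset.sum_congr rfl fun _ _ => by ring
    _ ≤ β ^ 2 * ∑ s, d s * |V1 s - V2 s| ^ 2 := by
        refine mul_le_mul_of_nonneg_left ?_ (sq_nonneg β)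
        exact sum_mul_mulVec_sq_le d (fun s => (hd s).le) Pe hPe0 hPe1 hstat2
          fun s => |V1 s - V2 s|
    _ = β ^ 2 * ∑ s, d s * ((V1 - V2) s) ^ 2 := by simp only [sq_abs, Pi.sub_apply]
end
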